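/- Let γ > 1 and l be real, let T ∈ (0, ∞], and let (ρ, U, p) with U = (u₁, u₂) be continuously differentiable functions on [0,T) × ℝ² such that ρ(t,·) and p(t,·) are supported in a fixed compact set K ⊂ ℝ² for every t, and which solve the 2D rotating compressible Euler system: ρ(∂ₜU + (U·∇)U + l·L·U) + ∇p = 0, ∂ₜρ + div(ρU) = 0, ∂ₜp + U·∇p + γ p div U = 0, where L·U = (−u₂, u₁). Define G(t) = (1/2)∫ρ|x|² dx, F₁(t) = ∫ρ(u₁x₁ + u₂x₂) dx, F₂(t) = ∫ρ(u₁x₂ − u₂x₁) dx, E_k(t) = (1/2)∫ρ|U|² dx, E_p(t) = (1/(γ−1))∫p dx (all integrals over ℝ²). Then for all t ∈ [0,T): G'(t) = F₁(t), F₂'(t) = l·F₁(t), and F₁'(t) = 2(γ−1)E_p(t) + 2E_k(t) − l·F₂(t). -/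

import Mathlib

open MeasureTheory
open Filter Topology in
theorem aux_diff_int (J : Set ℝ) (hJ0 : J ⊆ Set.Ici 0) (hU : UniqueDiffOn ℝ J)
    (hb : ∀ t ∈ J, ∃ b, t < b ∧ Set.Icc 0 b ⊆ J)
    (f : ℝ × ℝ × ℝ → ℝ) (hf : ContDiffOn ℝ 1 f (J ×ˢ (Set.univ : Set (ℝ × ℝ))))
    (K : Set (ℝ × ℝ)) (hK : IsCompact K) (hs : ∀ t z, z ∉ K → f (t, z) = 0)
    (f' : ℝ × ℝ → ℝ) (t : ℝ) (ht : t ∈ J)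
    (hf' : ∀ z, HasDerivWithinAt (fun s => f (s, z)) (f' z) J t) :
    HasDerivWithinAt (fun τ => ∫ z, f (τ, z)) (∫ z, f' z) J t := by
  obtain ⟨b, htb, hbJ⟩ := hb t ht
  set D : ℝ × ℝ × ℝ → ℝ := fun q => fderivWithin ℝ f (J ×ˢ Set.univ) q (1, 0) with hD
  have hDc : ContinuousOn D (J ×ˢ Set.univ) :=
    (hf.continuousOn_fderivWithin (hU.prod uniqueDiffOn_univ) le_rfl).clm_apply
      continuousOn_const
  have hder : ∀ s ∈ J, ∀ z, HasDerivWithinAt (fun s => f (s, z)) (D (s, z)) J s := by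
    intro s hs z
    have h1 : HasFDerivWithinAt f (fderivWithin ℝ f (J ×ˢ Set.univ) (s, z)) (J ×ˢ Set.univ) (s, z) :=
      ((hf.differentiableOn (by simp)) (s, z) ⟨hs, trivial⟩).hasFDerivWithinAt
    have h2 : HasDerivWithinAt (fun s : ℝ => (s, z)) ((1 : ℝ), (0 : ℝ × ℝ)) J s :=
      (hasDerivWithinAt_id s J).prodMk (hasDerivWithinAt_const s J z)
    have h3 : Set.MapsTo (fun s : ℝ => (s, z)) J (J ×ˢ Set.univ) := fun x hx => ⟨hx, trivial⟩
    exact h1.comp_hasDerivWithinAt s h2 h3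
  obtain ⟨C, hC⟩ := ((isCompact_Icc (a := (0:ℝ)) (b := b)).prod hK).exists_bound_of_continuousOn
    (hDc.mono (Set.prod_mono hbJ (Set.subset_univ _)))
  have hlip : ∀ z, ∀ s ∈ Set.Icc 0 b, ‖slope (fun s => f (s, z)) t s‖ ≤ K.indicator (fun _ => C) z := by
    intro z s hs'
    by_cases hz : z ∈ K
    · have h := (convex_Icc (0:ℝ) b).norm_image_sub_le_of_norm_hasDerivWithin_le
        (f := fun s => f (s, z)) (f' := fun s => D (s, z)) (C := C) 
        (fun x hx => (hder x (hbJ hx) z).mono hbJ) (fun x hx => hC (x, z) ⟨hx, hz⟩)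
        (x := t) (y := s) ⟨hJ0 ht, htb.le⟩ hs'
      rw [Set.indicator_of_mem hz, slope_def_field, norm_div]
      have hC0 : 0 ≤ C := (norm_nonneg _).trans (hC (t, z) ⟨⟨hJ0 ht, htb.le⟩, hz⟩)
      exact div_le_of_le_mul₀ (norm_nonneg _) hC0 h
    · simp [slope_def_field, hz, hs]
  have hcont : ∀ s ∈ J, Continuous fun z => f (s, z) := by
    intro s hs
    rw [← continuousOn_univ]
    exact hf.continuousOn.comp (by fun_prop) (fun z _ => ⟨hs, trivial⟩)
  have hint : ∀ s ∈ J, Integrable fun z => f (s, z) := fun s hs' =>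
    (hcont s hs').integrable_of_hasCompactSupport (HasCompactSupport.intro hK (hs s))
  rw [hasDerivWithinAt_iff_tendsto_slope]
  have hIcc : ∀ᶠ s in 𝓝[J \ {t}] t, s ∈ Set.Icc 0 b := by
    have : ∀ᶠ s in 𝓝[J \ {t}] t, s < b := nhdsWithin_le_nhds (Iio_mem_nhds htb)
    filter_upwards [this, self_mem_nhdsWithin] with s h1 h2
    exact ⟨hJ0 h2.1, h1.le⟩
  have key : Tendsto (fun s => ∫ z, slope (fun s => f (s, z)) t s) (𝓝[J \ {t}] t) (𝓝 (∫ z, f' z)) := by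
    apply tendsto_integral_filter_of_dominated_convergence (K.indicator (fun _ => C))
    · filter_upwards [self_mem_nhdsWithin] with s h
      simp only [slope_def_field]
      exact (((hcont s h.1).sub (hcont t ht)).div_const _).aestronglyMeasurable
    · filter_upwards [hIcc] with s h
      exact Eventually.of_forall fun z => hlip z s h
    · exact (integrable_indicator_iff hK.measurableSet).2
        (integrableOn_const hK.measure_lt_top.ne)
    · exact Eventually.of_forall fun z => hasDerivWithinAt_iff_tendsto_slope.1 (hf' z)
  refine key.congr' ?_
  filter_upwards [self_mem_nhdsWithin] with s h
  simp only [slope_def_field]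
  rw [integral_div, integral_sub (hint s h.1) (hint t ht)]

theorem aux_ibp (K : Set (ℝ × ℝ)) (hK : IsCompact K) (w g : ℝ × ℝ → ℝ)
    (hw : ContDiff ℝ 1 w) (hg : ContDiff ℝ 1 g) (hs : ∀ z, z ∉ K → g z = 0) (v : ℝ × ℝ) :
    Integrable (fun z => w z * fderiv ℝ g z v) ∧ Integrable (fun z => fderiv ℝ w z v * g z) ∧
    ∫ z, w z * fderiv ℝ g z v = - ∫ z, fderiv ℝ w z v * g z := by
  have hgs : HasCompactSupport g := HasCompactSupport.intro hK hs
  have hgc := hg.continuous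
  have hwc := hw.continuous
  have hg' : Continuous fun z => fderiv ℝ g z v :=
    (hg.continuous_fderiv one_ne_zero).clm_apply continuous_const
  have hw' : Continuous fun z => fderiv ℝ w z v :=
    (hw.continuous_fderiv one_ne_zero).clm_apply continuous_const
  have i1 : Integrable (fun z => w z * fderiv ℝ g z v) :=
    (hwc.mul hg').integrable_of_hasCompactSupport ((hgs.fderiv_apply ℝ v).mul_left)
  have i2 : Integrable (fun z => fderiv ℝ w z v * g z) :=
    (hw'.mul hgc).integrable_of_hasCompactSupport (hgs.mul_left)
  have i3 : Integrable (fun z => w z * g z) :=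
    (hwc.mul hgc).integrable_of_hasCompactSupport (hgs.mul_left)
  exact ⟨i1, i2, integral_mul_fderiv_eq_neg_fderiv_mul_of_integrable i2 i1 i3
    (fun x _ => hw.differentiable one_ne_zero x) (fun x _ => hg.differentiable one_ne_zero x)⟩

theorem aux_slice (g : ℝ × ℝ → ℝ) (hg : ContDiff ℝ 1 g) (x y : ℝ) :
    HasDerivAt (fun s => g (s, y)) (fderiv ℝ g (x, y) (1, 0)) x ∧
    HasDerivAt (fun s => g (x, s)) (fderiv ℝ g (x, y) (0, 1)) y := by
  have h := (hg.differentiable one_ne_zero (x, y)).hasFDerivAt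
  exact ⟨h.comp_hasDerivAt x ((hasDerivAt_id x).prodMk (hasDerivAt_const x y)),
    h.comp_hasDerivAt y ((hasDerivAt_const y x).prodMk (hasDerivAt_id y))⟩

theorem aux_cons (J : Set ℝ) (hJ0 : J ⊆ Set.Ici 0) (hU : UniqueDiffOn ℝ J)
    (hb : ∀ t ∈ J, ∃ b, t < b ∧ Set.Icc 0 b ⊆ J)
    (K : Set (ℝ × ℝ)) (hK : IsCompact K)
    (m : ℝ × ℝ × ℝ → ℝ) (hm : ContDiffOn ℝ 1 m (J ×ˢ (Set.univ : Set (ℝ × ℝ))))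
    (hms : ∀ t z, z ∉ K → m (t, z) = 0)
    (a b s : ℝ × ℝ → ℝ) (ha : ContDiff ℝ 1 a) (hbb : ContDiff ℝ 1 b) (hsc : Continuous s)
    (has : ∀ z, z ∉ K → a z = 0) (hbs : ∀ z, z ∉ K → b z = 0) (hss : ∀ z, z ∉ K → s z = 0)
    (t : ℝ) (ht : t ∈ J) (mt ax bY : ℝ → ℝ → ℝ)
    (hmt : ∀ x y, HasDerivWithinAt (fun s => m (s, x, y)) (mt x y) J t)
    (hax : ∀ x y, HasDerivAt (fun s => a (s, y)) (ax x y) x)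
    (hby : ∀ x y, HasDerivAt (fun s => b (x, s)) (bY x y) y)
    (heq : ∀ x y, mt x y + ax x y + bY x y + s (x, y) = 0)
    (w wx wy : ℝ × ℝ → ℝ) (hw : ContDiff ℝ 1 w)
    (hwx : ∀ x y, HasDerivAt (fun s => w (s, y)) (wx (x, y)) x)
    (hwy : ∀ x y, HasDerivAt (fun s => w (x, s)) (wy (x, y)) y) :
    HasDerivWithinAt (fun τ => ∫ z, m (τ, z) * w z)
      (∫ z, (wx z * a z + wy z * b z - w z * s z)) J t := by
  have h := aux_diff_int J hJ0 hU hb (fun q => m q * w q.2)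
    (hm.mul (hw.comp contDiff_snd).contDiffOn) K hK (fun t z hz => by simp [hms t z hz])
    (fun z => mt z.1 z.2 * w z) t ht (fun z => (hmt z.1 z.2).mul_const (w z))
  convert h using 1
  obtain ⟨i1, i2, e1⟩ := aux_ibp K hK w a hw ha has (1, 0)
  obtain ⟨j1, j2, e2⟩ := aux_ibp K hK w b hw hbb hbs (0, 1)
  have i3 : Integrable (fun z => w z * s z) :=
    (hw.continuous.mul hsc).integrable_of_hasCompactSupport
      ((HasCompactSupport.intro hK hss).mul_left)
  have l : ∀ z, mt z.1 z.2 * w z =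
      -(w z * fderiv ℝ a z (1, 0)) - w z * fderiv ℝ b z (0, 1) - w z * s z := by
    rintro ⟨x, y⟩
    rw [← (hax x y).unique (aux_slice a ha x y).1, ← (hby x y).unique (aux_slice b hbb x y).2]
    linear_combination w (x, y) * heq x y
  have r : ∀ z, wx z * a z + wy z * b z - w z * s z =
      fderiv ℝ w z (1, 0) * a z + fderiv ℝ w z (0, 1) * b z - w z * s z := by
    rintro ⟨x, y⟩
    rw [← (hwx x y).unique (aux_slice w hw x y).1, ← (hwy x y).unique (aux_slice w hw x y).2]
  simp only [l, r]
  have k1 : Integrable (fun z => fderiv ℝ w z (1, 0) * a z + fderiv ℝ w z (0, 1) * b z) :=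
    i2.add j2
  have k2 : Integrable (fun z => -(w z * fderiv ℝ a z (1, 0))) := i1.neg
  have k3 : Integrable (fun z => -(w z * fderiv ℝ a z (1, 0)) - w z * fderiv ℝ b z (0, 1)) :=
    k2.sub j1
  rw [integral_sub k1 i3, integral_add i2 j2, integral_sub k3 i3,
    integral_sub k2 j1, integral_neg, e1, e2]
  ring


/-- Virial identities for classical solutions of the 2D rotating
compressible Euler system on `[0,T) × ℝ²` (with `0 < T ≤ ∞`), with `ρ(t,·)` and
`p(t,·)` supported in a fixed compact set `K`:
`G' = F₁`, `F₂' = l F₁`, `F₁' = 2(γ−1)E_p + 2E_k − l F₂`, where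
`G = (1/2)∫ρ|x|²`, `F₁ = ∫ρ(U·x)`, `F₂ = ∫ρ(U·x⊥)`, `E_k = (1/2)∫ρ|U|²`,
`E_p = (1/(γ−1))∫p`. -/
theorem stmt_19 (γ l : ℝ) (hγ : 1 < γ) (J : Set ℝ)
    (hJ : (∃ T : ℝ, 0 < T ∧ J = Set.Ico 0 T) ∨ J = Set.Ici 0)
    (ρ u₁ u₂ p : ℝ → ℝ → ℝ → ℝ)
    (hρreg : ContDiffOn ℝ 1 (fun q : ℝ × ℝ × ℝ => ρ q.1 q.2.1 q.2.2)
      (J ×ˢ (Set.univ : Set (ℝ × ℝ))))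
    (hu₁reg : ContDiffOn ℝ 1 (fun q : ℝ × ℝ × ℝ => u₁ q.1 q.2.1 q.2.2)
      (J ×ˢ (Set.univ : Set (ℝ × ℝ))))
    (hu₂reg : ContDiffOn ℝ 1 (fun q : ℝ × ℝ × ℝ => u₂ q.1 q.2.1 q.2.2)
      (J ×ˢ (Set.univ : Set (ℝ × ℝ))))
    (hpreg : ContDiffOn ℝ 1 (fun q : ℝ × ℝ × ℝ => p q.1 q.2.1 q.2.2)
      (J ×ˢ (Set.univ : Set (ℝ × ℝ))))
    (K : Set (ℝ × ℝ)) (hK : IsCompact K)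
    (hρsupp : ∀ t x y : ℝ, (x, y) ∉ K → ρ t x y = 0)
    (hpsupp : ∀ t x y : ℝ, (x, y) ∉ K → p t x y = 0)
    -- momentum equation, first component (L·U = (−u₂, u₁)):
    (hmom₁ : ∀ t ∈ J, ∀ x y : ℝ,
      ρ t x y * (derivWithin (fun s => u₁ s x y) J t +
          u₁ t x y * deriv (fun s => u₁ t s y) x +
          u₂ t x y * deriv (fun s => u₁ t x s) y + l * (-(u₂ t x y))) +
        deriv (fun s => p t s y) x = 0)
    -- momentum equation, second component:
    (hmom₂ : ∀ t ∈ J, ∀ x y : ℝ,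
      ρ t x y * (derivWithin (fun s => u₂ s x y) J t +
          u₁ t x y * deriv (fun s => u₂ t s y) x +
          u₂ t x y * deriv (fun s => u₂ t x s) y + l * u₁ t x y) +
        deriv (fun s => p t x s) y = 0)
    -- continuity equation:
    (hcont : ∀ t ∈ J, ∀ x y : ℝ,
      derivWithin (fun s => ρ s x y) J t +
        deriv (fun s => ρ t s y * u₁ t s y) x +
        deriv (fun s => ρ t x s * u₂ t x s) y = 0)
    -- pressure equation:
    (hpres : ∀ t ∈ J, ∀ x y : ℝ,
      derivWithin (fun s => p s x y) J t +
        u₁ t x y * deriv (fun s => p t s y) x +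
        u₂ t x y * deriv (fun s => p t x s) y +
        γ * p t x y * (deriv (fun s => u₁ t s y) x + deriv (fun s => u₂ t x s) y) = 0) :
    ∀ t ∈ J,
      HasDerivWithinAt
        (fun τ => (1 / 2) * ∫ z : ℝ × ℝ, ρ τ z.1 z.2 * (z.1 ^ 2 + z.2 ^ 2))
        (∫ z : ℝ × ℝ, ρ t z.1 z.2 * (u₁ t z.1 z.2 * z.1 + u₂ t z.1 z.2 * z.2)) J t ∧
      HasDerivWithinAt
        (fun τ => ∫ z : ℝ × ℝ, ρ τ z.1 z.2 * (u₁ τ z.1 z.2 * z.2 - u₂ τ z.1 z.2 * z.1))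
        (l * ∫ z : ℝ × ℝ, ρ t z.1 z.2 * (u₁ t z.1 z.2 * z.1 + u₂ t z.1 z.2 * z.2)) J t ∧
      HasDerivWithinAt
        (fun τ => ∫ z : ℝ × ℝ, ρ τ z.1 z.2 * (u₁ τ z.1 z.2 * z.1 + u₂ τ z.1 z.2 * z.2))
        (2 * (γ - 1) * ((1 / (γ - 1)) * ∫ z : ℝ × ℝ, p t z.1 z.2) +
          2 * ((1 / 2) * ∫ z : ℝ × ℝ,
            ρ t z.1 z.2 * ((u₁ t z.1 z.2) ^ 2 + (u₂ t z.1 z.2) ^ 2)) -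
          l * ∫ z : ℝ × ℝ,
            ρ t z.1 z.2 * (u₁ t z.1 z.2 * z.2 - u₂ t z.1 z.2 * z.1)) J t := by
  have hJ0 : J ⊆ Set.Ici 0 := by
    rcases hJ with ⟨T, hT, rfl⟩ | rfl
    · exact fun x hx => hx.1
    · exact subset_rfl
  have hU : UniqueDiffOn ℝ J := by
    rcases hJ with ⟨T, hT, rfl⟩ | rfl
    · exact uniqueDiffOn_Ico 0 T
    · exact uniqueDiffOn_Ici 0
  have hb : ∀ t ∈ J, ∃ b, t < b ∧ Set.Icc 0 b ⊆ J := by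
    rcases hJ with ⟨T, hT, rfl⟩ | rfl
    · rintro t ⟨h0, h1⟩
      exact ⟨(t + T) / 2, by linarith, fun x hx => ⟨hx.1, by linarith [hx.2]⟩⟩
    · intro t _
      exact ⟨t + 1, by linarith, fun x hx => hx.1⟩
  intro t ht
  -- time slices
  have slice : ∀ f : ℝ → ℝ → ℝ → ℝ, ContDiffOn ℝ 1 (fun q : ℝ × ℝ × ℝ => f q.1 q.2.1 q.2.2)
      (J ×ˢ (Set.univ : Set (ℝ × ℝ))) →
      ContDiff ℝ 1 (fun z : ℝ × ℝ => f t z.1 z.2) ∧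
      (∀ x y, HasDerivWithinAt (fun s => f s x y) (derivWithin (fun s => f s x y) J t) J t) ∧
      (∀ x y, HasDerivAt (fun s => f t s y) (deriv (fun s => f t s y) x) x) ∧
      (∀ x y, HasDerivAt (fun s => f t x s) (deriv (fun s => f t x s) y) y) := by
    intro f hf
    have hc : ContDiff ℝ 1 (fun z : ℝ × ℝ => f t z.1 z.2) := by
      rw [← contDiffOn_univ]
      have hg : ContDiffOn ℝ 1 (fun z : ℝ × ℝ => (t, z)) Set.univ :=
        (contDiff_const.prodMk contDiff_id).contDiffOn
      have hmaps : Set.MapsTo (fun z : ℝ × ℝ => (t, z)) Set.univ (J ×ˢ Set.univ) :=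
        fun z _ => ⟨ht, trivial⟩
      exact hf.comp hg hmaps
    refine ⟨hc, fun x y => ?_, fun x y => ?_, fun x y => ?_⟩
    · apply DifferentiableWithinAt.hasDerivWithinAt
      have h1 := hf.differentiableOn one_ne_zero (t, x, y) ⟨ht, trivial⟩
      have hg : DifferentiableWithinAt ℝ (fun s : ℝ => (s, x, y)) J t := by fun_prop
      have hmaps : Set.MapsTo (fun s : ℝ => (s, x, y)) J (J ×ˢ Set.univ) :=
        fun z hz => ⟨hz, trivial⟩
      exact DifferentiableWithinAt.comp t h1 hg hmaps
    · exact (aux_slice _ hc x y).1.differentiableAt.hasDerivAt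
    · exact (aux_slice _ hc x y).2.differentiableAt.hasDerivAt
  obtain ⟨ρc, ρt, ρx, ρy⟩ := slice ρ hρreg
  obtain ⟨uc, ut, ux, uy⟩ := slice u₁ hu₁reg
  obtain ⟨vc, vt, vx, vy⟩ := slice u₂ hu₂reg
  obtain ⟨pc, pt, px, py⟩ := slice p hpreg
  have hcont' := hcont t ht
  have hρs : ∀ τ (z : ℝ × ℝ), z ∉ K → ρ τ z.1 z.2 = 0 := fun τ z hz => hρsupp τ z.1 z.2 hz
  have hps : ∀ τ (z : ℝ × ℝ), z ∉ K → p τ z.1 z.2 = 0 := fun τ z hz => hpsupp τ z.1 z.2 hz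
  have contslice : ∀ f : ℝ → ℝ → ℝ → ℝ, ContDiffOn ℝ 1
      (fun q : ℝ × ℝ × ℝ => f q.1 q.2.1 q.2.2) (J ×ˢ (Set.univ : Set (ℝ × ℝ))) →
      ∀ τ ∈ J, Continuous fun z : ℝ × ℝ => f τ z.1 z.2 := by
    intro f hf τ hτ
    rw [← continuousOn_univ]
    have hg : ContinuousOn (fun z : ℝ × ℝ => (τ, z)) Set.univ := by fun_prop
    have hmaps : Set.MapsTo (fun z : ℝ × ℝ => (τ, z)) Set.univ (J ×ˢ Set.univ) :=
      fun z _ => ⟨hτ, trivial⟩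
    exact hf.continuousOn.comp hg hmaps
  have hint : ∀ τ ∈ J, ∀ h : ℝ × ℝ → ℝ, Continuous h →
      Integrable fun z : ℝ × ℝ => ρ τ z.1 z.2 * h z := by
    intro τ hτ h hh
    refine ((contslice ρ hρreg τ hτ).mul hh).integrable_of_hasCompactSupport
      (HasCompactSupport.intro hK fun z hz => ?_)
    simp [hρs τ z hz]
  have pint : Integrable fun z : ℝ × ℝ => p t z.1 z.2 :=
    pc.continuous.integrable_of_hasCompactSupport (HasCompactSupport.intro hK (hps t))
  have dG := aux_cons J hJ0 hU hb K hK _ hρreg hρs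
    (fun z => ρ t z.1 z.2 * u₁ t z.1 z.2) (fun z => ρ t z.1 z.2 * u₂ t z.1 z.2) (fun _ => 0)
    (ρc.mul uc) (ρc.mul vc) continuous_const (fun z hz => by simp [hρs t z hz])
    (fun z hz => by simp [hρs t z hz]) (fun _ _ => rfl) t ht _ _ _ ρt
    (fun x y => ((ρx x y).mul (ux x y)).differentiableAt.hasDerivAt)
    (fun x y => ((ρy x y).mul (vy x y)).differentiableAt.hasDerivAt)
    (fun x y => by simpa [Pi.mul_def] using hcont' x y)
    (fun z => z.1 ^ 2 + z.2 ^ 2) (fun z => 2 * z.1) (fun z => 2 * z.2) (by fun_prop)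
    (fun x y => by simpa using ((hasDerivAt_id x).pow 2).add_const (y ^ 2))
    (fun x y => by simpa using ((hasDerivAt_id y).pow 2).const_add (x ^ 2))
  have d1 := fun w wx wy hw hwx hwy => aux_cons J hJ0 hU hb K hK _ (hρreg.mul hu₁reg)
    (fun τ z hz => by simp [hρs τ z hz])
    (fun z => ρ t z.1 z.2 * u₁ t z.1 z.2 * u₁ t z.1 z.2 + p t z.1 z.2)
    (fun z => ρ t z.1 z.2 * u₂ t z.1 z.2 * u₁ t z.1 z.2)
    (fun z => - l * (ρ t z.1 z.2 * u₂ t z.1 z.2))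
    (((ρc.mul uc).mul uc).add pc) ((ρc.mul vc).mul uc)
    (continuous_const.mul (ρc.continuous.mul vc.continuous))
    (fun z hz => by simp [hρs t z hz, hps t z hz])
    (fun z hz => by simp [hρs t z hz]) (fun z hz => by simp [hρs t z hz]) t ht _ _ _
    (fun x y => (ρt x y).mul (ut x y))
    (fun x y => (((ρx x y).mul (ux x y)).mul (ux x y)).add (px x y))
    (fun x y => ((ρy x y).mul (vy x y)).mul (uy x y))
    (fun x y => by
      have h1 := hmom₁ t ht x y
      have h2 := hcont' x y
      have e1 := ((ρx x y).mul (ux x y)).deriv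
      have e2 := ((ρy x y).mul (vy x y)).deriv
      simp only [Pi.mul_def] at e1 e2
      rw [e1, e2] at h2
      simp only [Pi.mul_apply]
      linear_combination h1 + u₁ t x y * h2) w wx wy hw hwx hwy
  have d2 := fun w wx wy hw hwx hwy => aux_cons J hJ0 hU hb K hK _ (hρreg.mul hu₂reg)
    (fun τ z hz => by simp [hρs τ z hz])
    (fun z => ρ t z.1 z.2 * u₁ t z.1 z.2 * u₂ t z.1 z.2)
    (fun z => ρ t z.1 z.2 * u₂ t z.1 z.2 * u₂ t z.1 z.2 + p t z.1 z.2)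
    (fun z => l * (ρ t z.1 z.2 * u₁ t z.1 z.2))
    ((ρc.mul uc).mul vc) (((ρc.mul vc).mul vc).add pc)
    (continuous_const.mul (ρc.continuous.mul uc.continuous))
    (fun z hz => by simp [hρs t z hz]) (fun z hz => by simp [hρs t z hz, hps t z hz])
    (fun z hz => by simp [hρs t z hz]) t ht _ _ _
    (fun x y => (ρt x y).mul (vt x y))
    (fun x y => ((ρx x y).mul (ux x y)).mul (vx x y))
    (fun x y => (((ρy x y).mul (vy x y)).mul (vy x y)).add (py x y))
    (fun x y => by
      have h1 := hmom₂ t ht x y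
      have h2 := hcont' x y
      have e1 := ((ρx x y).mul (ux x y)).deriv
      have e2 := ((ρy x y).mul (vy x y)).deriv
      simp only [Pi.mul_def] at e1 e2
      rw [e1, e2] at h2
      simp only [Pi.mul_apply]
      linear_combination h1 + u₂ t x y * h2) w wx wy hw hwx hwy
  have d1x := d1 (fun z => z.1) (fun _ => 1) (fun _ => 0) contDiff_fst
    (fun x y => hasDerivAt_id x) (fun x y => hasDerivAt_const y x)
  have d1y := d1 (fun z => z.2) (fun _ => 0) (fun _ => 1) contDiff_snd
    (fun x y => hasDerivAt_const x y) (fun x y => hasDerivAt_id y)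
  have d2x := d2 (fun z => z.1) (fun _ => 1) (fun _ => 0) contDiff_fst
    (fun x y => hasDerivAt_id x) (fun x y => hasDerivAt_const y x)
  have d2y := d2 (fun z => z.2) (fun _ => 0) (fun _ => 1) contDiff_snd
    (fun x y => hasDerivAt_const x y) (fun x y => hasDerivAt_id y)
  have ucτ := contslice u₁ hu₁reg
  have vcτ := contslice u₂ hu₂reg
  have ut' := ucτ t ht
  have vt' := vcτ t ht
  have iux : ∀ τ ∈ J, Integrable fun z : ℝ × ℝ => ρ τ z.1 z.2 * (u₁ τ z.1 z.2 * z.1) :=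
    fun τ hτ => hint τ hτ (fun z => u₁ τ z.1 z.2 * z.1) ((ucτ τ hτ).mul continuous_fst)
  have iuy : ∀ τ ∈ J, Integrable fun z : ℝ × ℝ => ρ τ z.1 z.2 * (u₁ τ z.1 z.2 * z.2) :=
    fun τ hτ => hint τ hτ (fun z => u₁ τ z.1 z.2 * z.2) ((ucτ τ hτ).mul continuous_snd)
  have ivx : ∀ τ ∈ J, Integrable fun z : ℝ × ℝ => ρ τ z.1 z.2 * (u₂ τ z.1 z.2 * z.1) :=
    fun τ hτ => hint τ hτ (fun z => u₂ τ z.1 z.2 * z.1) ((vcτ τ hτ).mul continuous_fst)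
  have ivy : ∀ τ ∈ J, Integrable fun z : ℝ × ℝ => ρ τ z.1 z.2 * (u₂ τ z.1 z.2 * z.2) :=
    fun τ hτ => hint τ hτ (fun z => u₂ τ z.1 z.2 * z.2) ((vcτ τ hτ).mul continuous_snd)
  have iuu : Integrable fun z : ℝ × ℝ => ρ t z.1 z.2 * (u₁ t z.1 z.2) ^ 2 :=
    hint t ht (fun z => (u₁ t z.1 z.2) ^ 2) (ut'.pow 2)
  have ivv : Integrable fun z : ℝ × ℝ => ρ t z.1 z.2 * (u₂ t z.1 z.2) ^ 2 :=
    hint t ht (fun z => (u₂ t z.1 z.2) ^ 2) (vt'.pow 2)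
  have iuv : Integrable fun z : ℝ × ℝ => ρ t z.1 z.2 * (u₁ t z.1 z.2 * u₂ t z.1 z.2) :=
    hint t ht (fun z => u₁ t z.1 z.2 * u₂ t z.1 z.2) (ut'.mul vt')
  have hF1 : ∀ τ ∈ J,
      ∫ z : ℝ × ℝ, ρ τ z.1 z.2 * (u₁ τ z.1 z.2 * z.1 + u₂ τ z.1 z.2 * z.2) =
      (∫ z : ℝ × ℝ, ρ τ z.1 z.2 * (u₁ τ z.1 z.2 * z.1)) +
        ∫ z : ℝ × ℝ, ρ τ z.1 z.2 * (u₂ τ z.1 z.2 * z.2) := by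
    intro τ hτ
    rw [← integral_add (iux τ hτ) (ivy τ hτ)]
    simp only [mul_add]
  have hF2 : ∀ τ ∈ J,
      ∫ z : ℝ × ℝ, ρ τ z.1 z.2 * (u₁ τ z.1 z.2 * z.2 - u₂ τ z.1 z.2 * z.1) =
      (∫ z : ℝ × ℝ, ρ τ z.1 z.2 * (u₁ τ z.1 z.2 * z.2)) -
        ∫ z : ℝ × ℝ, ρ τ z.1 z.2 * (u₂ τ z.1 z.2 * z.1) := by
    intro τ hτ
    rw [← integral_sub (iuy τ hτ) (ivx τ hτ)]
    simp only [mul_sub]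
  have hE : ∫ z : ℝ × ℝ, ρ t z.1 z.2 * ((u₁ t z.1 z.2) ^ 2 + (u₂ t z.1 z.2) ^ 2) =
      (∫ z : ℝ × ℝ, ρ t z.1 z.2 * (u₁ t z.1 z.2) ^ 2) +
        ∫ z : ℝ × ℝ, ρ t z.1 z.2 * (u₂ t z.1 z.2) ^ 2 := by
    rw [← integral_add iuu ivv]
    simp only [mul_add]
  -- combination of two integrals and of three
  have lin2 : ∀ (f g h : ℝ × ℝ → ℝ) (c : ℝ), Integrable g → Integrable h →
      (∀ z, f z = g z + c * h z) → ∫ z, f z = (∫ z, g z) + c * ∫ z, h z := by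
    intro f g h c hg hh he
    rw [← integral_const_mul, ← integral_add hg (hh.const_mul c)]
    exact integral_congr_ae (Filter.Eventually.of_forall he)
  have hγ' : γ - 1 ≠ 0 := by linarith
  have d1y' := d1y.congr_deriv (lin2 _ _ _ l iuv (ivy t ht) (fun z => by ring))
  have d2x' := d2x.congr_deriv (lin2 _ _ _ (-l) iuv (iux t ht) (fun z => by ring))
  have d1x' := d1x.congr_deriv (lin2 _ _ _ l (iuu.add pint) (ivx t ht)
    (fun z => by simp only [Pi.add_apply]; ring))
  have d2y' := d2y.congr_deriv (lin2 _ _ _ (-l) (ivv.add pint) (iuy t ht)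
    (fun z => by simp only [Pi.add_apply]; ring))
  rw [integral_add' iuu pint] at d1x'
  rw [integral_add' ivv pint] at d2y'
  refine ⟨?_, ?_, ?_⟩
  · refine (dG.const_mul (1 / 2)).congr_deriv ?_
    rw [← integral_const_mul]
    congr 1
    funext z
    ring
  · refine ((d1y'.sub d2x').congr (fun τ hτ => ?_) ?_).congr_deriv ?_
    · rw [hF2 τ hτ]
      simp only [Pi.sub_apply, Pi.mul_apply, mul_assoc]
    · rw [hF2 t ht]
      simp only [Pi.sub_apply, Pi.mul_apply, mul_assoc]
    · rw [hF1 t ht]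
      ring
  · refine ((d1x'.add d2y').congr (fun τ hτ => ?_) ?_).congr_deriv ?_
    · rw [hF1 τ hτ]
      simp only [Pi.add_apply, Pi.mul_apply, mul_assoc]
    · rw [hF1 t ht]
      simp only [Pi.add_apply, Pi.mul_apply, mul_assoc]
    · rw [hF2 t ht, hE]
      field_simp
      ring
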